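/- arXiv:2206.15293 — 2 statements merged into one kernel-verified Lean document; each statement's English description precedes it below -/
import Mathlib

section
/- If N is a perfect normal subgroup of a finite group G (N = N' and N > 1), θ ∈ Irr(N) is a non-trivial character that extends to χ ∈ Irr(G), and χ = λ^G for some subgroup H ≤ G and λ ∈ Irr(H), then HN = G, the restriction λ_{H∩N} is irreducible, and θ = (λ_{H∩N})^N. -/
open CategoryTheory BigOperators
open scoped Classical

noncomputable section

/-- `χ` is an irreducible complex character of the finite group `G`. -/
def IsIrrChar {G : Type} [Group G] [Fintype G] (χ : G → ℂ) : Prop :=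
  ∃ V : FDRep ℂ G, Simple V ∧ χ = V.character

/-- The class function on `G` induced from the function `η` on the subgroup `H`. -/
def indChar {G : Type} [Group G] [Fintype G] (H : Subgroup G) (η : H → ℂ) : G → ℂ :=
  fun g => (Fintype.card H : ℂ)⁻¹ *
    ∑ x : G, if h : x⁻¹ * g * x ∈ H then η ⟨x⁻¹ * g * x, h⟩ else 0

/-- `χ` is monomial: induced from a linear character of some subgroup. -/
def IsMonomial {G : Type} [Group G] [Fintype G] (χ : G → ℂ) : Prop :=
  ∃ (H : Subgroup G) (η : H →* ℂ), χ = indChar H fun h => η h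

/-- `χ` is primitive: not induced from an (irreducible) character of a proper subgroup. -/
def IsPrimitive {G : Type} [Group G] [Fintype G] (χ : G → ℂ) : Prop :=
  ¬ ∃ (H : Subgroup G), H ≠ ⊤ ∧ ∃ η : H → ℂ, IsIrrChar η ∧ χ = indChar H η

/-- The usual hermitian inner product of class functions. -/
def charInner {H : Type} [Group H] [Fintype H] (α β : H → ℂ) : ℂ :=
  (Fintype.card H : ℂ)⁻¹ * ∑ h, α h * (starRingEnd ℂ) (β h)

/-!
Write `D = H ⊓ N`. Since `θ` is irreducible and restricts `χ = λ^G`,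
`1 = ⟨θ, (λ^G)_N⟩ = [G : HN] ⟨θ_D, λ_D⟩`, so `HN = G` and `⟨θ_D, λ_D⟩ = 1`. As `H \ G / N` is
then a single double coset, Mackey's formula gives `θ = (λ_D)^N`, and in particular
`θ(1) = [N : D] λ(1)`.

For the irreducibility of `λ_D`, let `T` and `W` afford `θ` and `λ_D`, and take a nonzero `D`-map
`p : T → W`. A proper `D`-stable subspace `U` of `T` has codimension at least `dim T / [N : D]`,
because the translates of `U` under `N ⧸ D` intersect in a proper `N`-stable subspace, which is
zero. With `U = ker p` this forces `p` to be surjective, so composition with `p` embeds `End_D(W)`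
into the line `Hom_D(T, W)`.
-/

section Index

variable {G : Type*} [Group G]

theorem relIndex_sup_left_of_normal (H N : Subgroup G) [N.Normal] :
    H.relIndex (H ⊔ N) = H.relIndex N := by
  let e := Subgroup.quotientSubgroupOfEmbeddingOfLE H (le_sup_right : N ≤ H ⊔ N)
  refine (Nat.card_congr (Equiv.ofBijective e ⟨e.injective, ?_⟩)).symm
  rintro ⟨x, hx⟩
  obtain ⟨n, hn, h, hh, rfl⟩ := Subgroup.mem_sup_of_normal_left.mp (sup_comm H N ▸ hx)
  refine ⟨QuotientGroup.mk ⟨n, hn⟩, QuotientGroup.eq.mpr ?_⟩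
  simpa [Subgroup.mem_subgroupOf] using hh

theorem relIndex_eq_index_of_sup_eq_top {H N : Subgroup G} [N.Normal] (hHN : H ⊔ N = ⊤) :
    H.relIndex N = H.index := by
  rw [← relIndex_sup_left_of_normal, hHN, Subgroup.relIndex_top_right]

theorem sup_eq_top_and_eq_one_of_relIndex_eq_index_mul {H N : Subgroup G} [N.Normal]
    [H.FiniteIndex] {m : ℕ} (h : H.relIndex N = H.index * m) : H ⊔ N = ⊤ ∧ m = 1 := by
  have hmul : H.relIndex (H ⊔ N) * ((H ⊔ N).index * m) = H.relIndex (H ⊔ N) * 1 := by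
    rw [← mul_assoc, Subgroup.relIndex_mul_index le_sup_left, ← h, relIndex_sup_left_of_normal,
      mul_one]
  have : H.IsFiniteRelIndex (H ⊔ N) := Subgroup.isFiniteRelIndex_of_finiteIndex
  have hone := Nat.eq_of_mul_eq_mul_left (Nat.pos_of_ne_zero Subgroup.relIndex_ne_zero) hmul
  rwa [mul_eq_one, Subgroup.index_eq_one] at hone

end Index

section Averages

variable {G K : Type*} [Group G] [Fintype G] [Field K] [CharZero K]

theorem expect_eq_expect_subgroup_of_sup_eq_top {H N : Subgroup G} [N.Normal] (hHN : H ⊔ N = ⊤)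
    {F : G → K} (hF : ∀ g, ∀ h ∈ H, F (g * h) = F g) : 𝔼 g, F g = 𝔼 n : N, F n := by
  have translate (g : G) : 𝔼 n : N, F (n * g) = 𝔼 n : N, F n := by
    have hg : g ∈ N ⊔ H := sup_comm H N ▸ hHN ▸ Subgroup.mem_top g
    obtain ⟨m, hm, h, hh, rfl⟩ := Subgroup.mem_sup_of_normal_left.mp hg
    refine Fintype.expect_equiv (Equiv.mulRight ⟨m, hm⟩) _ _ fun n => ?_
    simp [← mul_assoc, hF _ h hh]
  calc 𝔼 g, F g = 𝔼 n : N, 𝔼 g, F (n * g) := by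
        rw [← Fintype.expect_const (ι := N) (𝔼 g, F g)]
        exact Finset.expect_congr rfl fun n _ =>
          (Fintype.expect_equiv (Equiv.mulLeft (n : G)) _ _ fun _ => rfl).symm
    _ = 𝔼 g, 𝔼 n : N, F (n * g) := Finset.expect_comm ..
    _ = 𝔼 n : N, F n := by simp only [translate, Fintype.expect_const]

theorem index_range_mul_expect_of_injective {A : Type*} [Group A] [Fintype A] {f : A →* G}
    (hf : Function.Injective f) {F : G → K} (hF : ∀ g ∉ f.range, F g = 0) :
    (f.range.index : K) * 𝔼 g, F g = 𝔼 a, F (f a) := by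
  have hcard : Nat.card A * f.range.index = Nat.card G := by
    rw [Nat.card_congr (MonoidHom.ofInjective hf).toEquiv, Subgroup.card_mul_index]
  have hsum : ∑ a, F (f a) = ∑ g, F g :=
    Fintype.sum_of_injective f hf _ F hF fun _ => rfl
  have hA : (Nat.card A : K) ≠ 0 := Nat.cast_ne_zero.mpr Nat.card_pos.ne'
  have hG : (Nat.card G : K) ≠ 0 := Nat.cast_ne_zero.mpr Nat.card_pos.ne'
  rw [Fintype.expect_eq_sum_div_card, Fintype.expect_eq_sum_div_card, hsum,
    Fintype.card_eq_nat_card, Fintype.card_eq_nat_card, mul_div_assoc', div_eq_div_iff hG hA,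
    ← hcard]
  push_cast
  ring

end Averages

section ExtendByZero

variable {G R : Type*} [Group G] [Zero R] {H : Subgroup G}

/-- The extension of a function on a subgroup by zero to the whole group, usually written `η°`. -/
def extendByZero (η : H → R) (g : G) : R :=
  if h : g ∈ H then η ⟨g, h⟩ else 0

theorem extendByZero_coe (η : H → R) (h : H) : extendByZero η (h : G) = η h :=
  dif_pos h.2

theorem extendByZero_of_notMem (η : H → R) {g : G} (hg : g ∉ H) :
    extendByZero η g = 0 :=
  dif_neg hg

theorem extendByZero_conj {η : H → R} (hη : ∀ a h, η (h * a * h⁻¹) = η a) (g : G) (h : H) :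
    extendByZero η (h * g * (h : G)⁻¹) = extendByZero η g := by
  by_cases hg : g ∈ H
  · lift g to H using hg
    exact_mod_cast (extendByZero_coe η _).trans ((hη g h).trans (extendByZero_coe η g).symm)
  · have hconj : (h : G) * g * (h : G)⁻¹ ∉ H := by
      rwa [Subgroup.mul_mem_cancel_right _ (inv_mem h.2), Subgroup.mul_mem_cancel_left _ h.2]
    rw [extendByZero_of_notMem η hg, extendByZero_of_notMem η hconj]

end ExtendByZero

section InducedFunctions

variable {G : Type} [Group G] [Fintype G] {H N : Subgroup G}

theorem indChar_eq_index_mul_expect (η : H → ℂ) (g : G) :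
    indChar H η g = H.index * 𝔼 x : G, extendByZero η (x⁻¹ * g * x) := by
  have hH : (Nat.card H : ℂ) ≠ 0 := Nat.cast_ne_zero.mpr Nat.card_pos.ne'
  have hindex : (H.index : ℂ) ≠ 0 := Nat.cast_ne_zero.mpr Subgroup.index_ne_zero_of_finite
  rw [Fintype.expect_eq_sum_div_card, Fintype.card_eq_nat_card (α := G), ← H.card_mul_index,
    indChar, Fintype.card_eq_nat_card]
  push_cast
  simp only [extendByZero]
  field_simp

theorem indChar_one (η : H → ℂ) : indChar H η 1 = H.index * η 1 := by
  have h1 : extendByZero η (1 : G) = η 1 := extendByZero_coe η 1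
  simp only [indChar_eq_index_mul_expect, mul_one, inv_mul_cancel, Fintype.expect_const, h1]

theorem indChar_conj (η : H → ℂ) (g x : G) : indChar H η (x * g * x⁻¹) = indChar H η g := by
  rw [indChar_eq_index_mul_expect, indChar_eq_index_mul_expect]
  congr 1
  refine Fintype.expect_equiv (Equiv.mulLeft x⁻¹) _ _ fun y => ?_
  simp [mul_assoc]

theorem expect_indChar_mul [N.Normal] (η : H → ℂ) {φ : G → ℂ}
    (hφ : ∀ g x, φ (x * g * x⁻¹) = φ g) :
    𝔼 n : N, indChar H η n * φ n = H.index * 𝔼 n : N, extendByZero η (n : G) * φ n := by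
  have translate (x : G) : 𝔼 n : N, extendByZero η (x⁻¹ * n * x) * φ n =
      𝔼 n : N, extendByZero η (n : G) * φ n := by
    refine Fintype.expect_equiv (MulAut.conjNormal x⁻¹).toEquiv _ _ fun n => ?_
    rw [← hφ n x⁻¹, inv_inv]
    congr <;> simp
  simp only [indChar_eq_index_mul_expect, mul_assoc (H.index : ℂ), ← Finset.mul_expect,
    Finset.expect_mul]
  rw [Finset.expect_comm]
  simp only [translate, Fintype.expect_const]

theorem relIndex_mul_expect_extendByZero_mul (η : H → ℂ) (φ : G → ℂ) :
    H.relIndex N * 𝔼 n : N, extendByZero η (n : G) * φ n =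
      𝔼 d : (H ⊓ N : Subgroup G), η (Subgroup.inclusion inf_le_left d) * φ d := by
  have hrange : (Subgroup.inclusion (inf_le_right : H ⊓ N ≤ N)).range = H.subgroupOf N := by
    rw [Subgroup.inclusion_range, Subgroup.inf_subgroupOf_right]
  have havg := index_range_mul_expect_of_injective
    (Subgroup.inclusion_injective (inf_le_right : H ⊓ N ≤ N))
    (F := fun n => extendByZero η (n : G) * φ n) fun n hn => by
      rw [hrange, Subgroup.mem_subgroupOf] at hn
      rw [extendByZero_of_notMem η hn, zero_mul]
  rw [hrange] at havg
  refine havg.trans (Finset.expect_congr rfl fun d _ => ?_)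
  congr 1
  exact extendByZero_coe η (Subgroup.inclusion inf_le_left d)

theorem indChar_coe_of_sup_eq_top [N.Normal] (hHN : H ⊔ N = ⊤) {η : H → ℂ}
    (hη : ∀ a h, η (h * a * h⁻¹) = η a) (n : N) :
    indChar H η n = indChar ((H ⊓ N).subgroupOf N)
      (fun y => η ⟨(y.1 : G), (Subgroup.mem_inf.mp (Subgroup.mem_subgroupOf.mp y.2)).1⟩) n := by
  have hinv (x : G) (h : G) (hh : h ∈ H) :
      extendByZero η ((x * h)⁻¹ * n * (x * h)) = extendByZero η (x⁻¹ * n * x) := by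
    rw [← extendByZero_conj hη (x⁻¹ * n * x) (⟨h, hh⟩⁻¹ : H)]
    simp [mul_assoc]
  have hindex : ((H ⊓ N).subgroupOf N).index = H.index := by
    rw [Subgroup.inf_subgroupOf_right]
    exact relIndex_eq_index_of_sup_eq_top hHN
  rw [indChar_eq_index_mul_expect, indChar_eq_index_mul_expect,
    expect_eq_expect_subgroup_of_sup_eq_top hHN hinv, hindex]
  congr 1
  refine Finset.expect_congr rfl fun y _ => ?_
  simp [extendByZero, Subgroup.mem_subgroupOf]

end InducedFunctions

section Irreducibility

universe u

/-- The pullback of a representation along a group homomorphism. -/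
abbrev pullbackFDRep {k A B : Type*} [Field k] [Monoid A] [Monoid B] (f : A →* B)
    (V : FDRep k B) : FDRep k A :=
  (Action.res (FGModuleCat k) f).obj V

theorem isIrreducible_of_simple {k G : Type*} [Field k] [Monoid G] (V : FDRep k G) [Simple V] :
    Representation.IsIrreducible V.ρ where
  exists_pair_ne := by
    refine ⟨⊥, ⊤, fun h => id_nonzero V ?_⟩
    ext v
    have hv : v ∈ (⊥ : Subrepresentation V.ρ) := h ▸ trivial
    exact hv
  eq_bot_or_eq_top U := by
    let ι : FDRep.of U.toRepresentation ⟶ V :=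
      ⟨FGModuleCat.ofHom U.toSubmodule.subtype, fun _ => rfl⟩
    have : Mono ι := ConcreteCategory.mono_of_injective ι Subtype.val_injective
    by_cases hι : ι = 0
    · refine Or.inl (bot_unique fun v hv => ?_)
      exact ConcreteCategory.congr_hom hι (⟨v, hv⟩ : U.toSubmodule)
    · have : IsIso ι := isIso_of_mono_of_nonzero hι
      refine Or.inr (top_unique fun v _ => ?_)
      obtain ⟨u, rfl⟩ := (ConcreteCategory.bijective_of_isIso ι).surjective v
      exact Subtype.property u

theorem exists_apply_notMem_of_isIrreducible {k G V : Type*} [Field k] [Monoid G]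
    [AddCommGroup V] [Module k V] (ρ : Representation k G V) [ρ.IsIrreducible]
    {U : Submodule k V} (hU : U ≠ ⊤) {v : V} (hv : v ≠ 0) : ∃ g, ρ g v ∉ U := by
  let core : Subrepresentation ρ :=
    { toSubmodule := ⨅ g, U.comap (ρ g)
      apply_mem_toSubmodule := by
        intro g w hw
        simp only [Submodule.mem_iInf, Submodule.mem_comap] at hw ⊢
        intro x
        simpa using hw (x * g) }
  have mem_core {w : V} : w ∈ core ↔ ∀ g, ρ g w ∈ U := Submodule.mem_iInf _
  by_contra! hvU
  have hvcore : v ∈ core := mem_core.mpr hvU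
  rcases eq_bot_or_eq_top core with hbot | htop
  · rw [hbot] at hvcore
    exact hv hvcore
  · refine hU (top_unique fun w _ => ?_)
    have hw : w ∈ core := htop ▸ trivial
    simpa using mem_core.mp hw 1

theorem finrank_le_index_mul_finrank_quotient {k G V : Type*} [Field k] [Group G]
    [AddCommGroup V] [Module k V] [FiniteDimensional k V] (ρ : Representation k G V)
    [ρ.IsIrreducible] (H : Subgroup G) [H.FiniteIndex] {U : Submodule k V} (hU : U ≠ ⊤)
    (hHU : ∀ h ∈ H, ∀ v ∈ U, ρ h v ∈ U) :
    Module.finrank k V ≤ H.index * Module.finrank k (V ⧸ U) := by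
  let Φ : V →ₗ[k] (G ⧸ H → V ⧸ U) := LinearMap.pi fun q => U.mkQ ∘ₗ ρ q.out⁻¹
  have hΦ : Function.Injective Φ := by
    refine (injective_iff_map_eq_zero Φ).mpr fun v hΦv => ?_
    by_contra hv
    obtain ⟨g, hg⟩ := exists_apply_notMem_of_isIrreducible ρ hU hv
    obtain ⟨h, hout⟩ := QuotientGroup.mk_out_eq_mul H g⁻¹
    have hmem : ρ (g⁻¹ * h)⁻¹ v ∈ U := by
      rw [← hout, ← Submodule.Quotient.mk_eq_zero]
      exact congrFun hΦv _
    have hmul : ρ h (ρ (g⁻¹ * h)⁻¹ v) = ρ g v := by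
      rw [← Module.End.mul_apply, ← map_mul, mul_inv_rev, inv_inv, mul_inv_cancel_left]
    exact hg (hmul ▸ hHU h h.2 _ hmem)
  have := Fintype.ofFinite (G ⧸ H)
  calc Module.finrank k V ≤ Module.finrank k (G ⧸ H → V ⧸ U) :=
        LinearMap.finrank_le_finrank_of_injective hΦ
    _ = H.index * Module.finrank k (V ⧸ U) := by
        rw [Module.finrank_pi_fintype, Finset.sum_const, Finset.card_univ, smul_eq_mul,
          Fintype.card_eq_nat_card, Subgroup.index]

theorem epi_of_finrank_eq_index_mul_finrank {k A B : Type*} [Field k] [Group A] [Group B]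
    {f : A →* B} [f.range.FiniteIndex] {V : FDRep k B} [Simple V] {W : FDRep k A}
    (hdim : Module.finrank k V = f.range.index * Module.finrank k W)
    {p : pullbackFDRep f V ⟶ W} (hp : p ≠ 0) : Epi p := by
  let L : V →ₗ[k] W := p.hom.hom.hom
  have hL (g : A) (v : V) : L (V.ρ (f g) v) = W.ρ g (L v) :=
    ConcreteCategory.congr_hom (p.comm g) v
  have hker : LinearMap.ker L ≠ ⊤ := fun h => hp <| by
    ext v
    exact LinearMap.congr_fun (LinearMap.ker_eq_top.mp h) v
  have := isIrreducible_of_simple V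
  have hstable : ∀ b ∈ f.range, ∀ v ∈ LinearMap.ker L, V.ρ b v ∈ LinearMap.ker L := by
    rintro _ ⟨g, rfl⟩ v hv
    rw [LinearMap.mem_ker] at hv ⊢
    rw [hL, hv, map_zero]
  have hle := finrank_le_index_mul_finrank_quotient V.ρ f.range hker hstable
  rw [hdim, L.quotKerEquivRange.finrank_eq] at hle
  have hrange : LinearMap.range L = ⊤ := Submodule.eq_top_of_finrank_eq <|
    (Submodule.finrank_le _).antisymm <|
      Nat.le_of_mul_le_mul_left hle (Nat.pos_of_ne_zero Subgroup.FiniteIndex.index_ne_zero)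
  exact ConcreteCategory.epi_of_surjective p (LinearMap.range_eq_top.mp hrange)

theorem simple_of_finrank_hom_pullbackFDRep_eq_one {k A B : Type u} [Field k] [IsAlgClosed k]
    [Group A] [Finite A] [NeZero (Nat.card A : k)] [Group B] {f : A →* B} [f.range.FiniteIndex]
    {V : FDRep k B} [Simple V] {W : FDRep k A}
    (hdim : Module.finrank k V = f.range.index * Module.finrank k W)
    (hhom : Module.finrank k (pullbackFDRep f V ⟶ W) = 1) : Simple W := by
  obtain ⟨p, hp⟩ := Module.finrank_pos_iff_exists_ne_zero.mp (hhom ▸ one_pos)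
  have := epi_of_finrank_eq_index_mul_finrank hdim hp
  have hinj : Function.Injective (Linear.leftComp k W p) := fun a b hab => (cancel_epi p).mp hab
  have hid : 𝟙 W ≠ 0 := fun h => hp <| by rw [← Category.comp_id p, h, Limits.comp_zero]
  refine (FDRep.simple_iff_end_is_rank_one W).mpr (le_antisymm ?_ ?_)
  · exact hhom ▸ LinearMap.finrank_le_finrank_of_injective hinj
  · exact Module.finrank_pos_iff_exists_ne_zero.mpr ⟨𝟙 W, hid⟩

end Irreducibility

section Restriction

theorem expect_char_mul_char_inv {k A : Type*} [Field k] [CharZero k] [Group A] [Fintype A]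
    (V W : FDRep k A) :
    𝔼 a, W.character a * V.character a⁻¹ = (Module.finrank k (V ⟶ W) : k) := by
  rw [← FDRep.scalar_product_char_eq_finrank_equivariant, Fintype.expect_eq_sum_div_card,
    Fintype.card_eq_nat_card, div_eq_inv_mul]

variable {G : Type} [Group G] [Fintype G] {N H : Subgroup G} [N.Normal]

theorem relIndex_eq_index_mul_finrank_hom {T : FDRep ℂ N} [Simple T] {W : FDRep ℂ H}
    (hres : ∀ n : N, indChar H W.character n = T.character n) :
    H.relIndex N = H.index * Module.finrank ℂ
      (pullbackFDRep (Subgroup.inclusion (inf_le_right : H ⊓ N ≤ N)) T ⟶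
        pullbackFDRep (Subgroup.inclusion (inf_le_left : H ⊓ N ≤ H)) W) := by
  let φ : G → ℂ := fun g => indChar H W.character g⁻¹
  have hφ (g x : G) : φ (x * g * x⁻¹) = φ g := by
    simp only [φ, ← indChar_conj W.character g⁻¹ x, mul_inv_rev, inv_inv, mul_assoc]
  have hφN (n : N) : φ n = T.character n⁻¹ := hres n⁻¹
  have hone : (1 : ℂ) = H.index * 𝔼 n : N, extendByZero W.character (n : G) * φ n := by
    rw [← expect_indChar_mul _ hφ]
    simp only [hφN, hres, expect_char_mul_char_inv]
    rw [FDRep.finrank_hom_simple_simple, if_pos ⟨Iso.refl T⟩, Nat.cast_one]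
  let T' := pullbackFDRep (Subgroup.inclusion (inf_le_right : H ⊓ N ≤ N)) T
  let W' := pullbackFDRep (Subgroup.inclusion (inf_le_left : H ⊓ N ≤ H)) W
  have hfinrank : H.relIndex N * 𝔼 n : N, extendByZero W.character (n : G) * φ n =
      (Module.finrank ℂ (T' ⟶ W') : ℂ) := by
    rw [relIndex_mul_expect_extendByZero_mul, ← expect_char_mul_char_inv]
    exact Finset.expect_congr rfl fun d _ =>
      congrArg (W'.character d * ·) (hφN (Subgroup.inclusion inf_le_right d))
  rw [← Nat.cast_inj (R := ℂ), Nat.cast_mul, ← hfinrank, mul_left_comm, ← hone, mul_one]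

end Restriction

theorem extension_induced_structure_general {G : Type} [Group G] [Fintype G] (N H : Subgroup G)
    [N.Normal] (θ : N → ℂ) (hθ : IsIrrChar θ) (W : FDRep ℂ H)
    (hres : ∀ n : N, indChar H W.character n = θ n) :
    H ⊔ N = ⊤ ∧
    IsIrrChar (fun x : (H ⊓ N : Subgroup G) =>
      W.character ⟨x.1, (Subgroup.mem_inf.mp x.2).1⟩) ∧
    θ = indChar ((H ⊓ N).subgroupOf N) (fun y => W.character
      ⟨(y.1 : G), (Subgroup.mem_inf.mp (Subgroup.mem_subgroupOf.mp y.2)).1⟩) := by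
  obtain ⟨T, _, rfl⟩ := hθ
  obtain ⟨hHN, hhom⟩ :=
    sup_eq_top_and_eq_one_of_relIndex_eq_index_mul (relIndex_eq_index_mul_finrank_hom hres)
  have hdim : Module.finrank ℂ T = H.index * Module.finrank ℂ W := by
    have h1 := (hres 1).symm.trans (indChar_one W.character)
    rw [FDRep.char_one, FDRep.char_one] at h1
    exact_mod_cast h1
  have hindex : (Subgroup.inclusion (inf_le_right : H ⊓ N ≤ N)).range.index = H.index := by
    rw [Subgroup.inclusion_range, Subgroup.inf_subgroupOf_right]
    exact relIndex_eq_index_of_sup_eq_top hHN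
  refine ⟨hHN, ⟨pullbackFDRep (Subgroup.inclusion inf_le_left) W, ?_, rfl⟩, funext fun n => ?_⟩
  · exact simple_of_finrank_hom_pullbackFDRep_eq_one (hindex ▸ hdim) hhom
  · rw [← hres, indChar_coe_of_sup_eq_top hHN W.char_conj]

/-- Lemma 2.8(1) of Qian–Pan: if a nontrivial character of a perfect normal subgroup
`N` extends to `χ ∈ Irr(G)` and `χ = λ^G` for `λ ∈ Irr(H)`, then `HN = G`,
`λ` restricts irreducibly to `H ∩ N`, and `θ = (λ_{H∩N})^N`. -/
theorem extension_induced_structure (G : Type) [Group G] [Fintype G]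
    (N H : Subgroup G) [N.Normal] (hN1 : N ≠ ⊥) (hNperf : ⁅N, N⁆ = N)
    (θ : N → ℂ) (hθ : IsIrrChar θ) (hθnt : θ ≠ fun _ => 1)
    (χ : G → ℂ) (hχ : IsIrrChar χ) (hext : ∀ n : N, χ n = θ n)
    (lam : H → ℂ) (hlam : IsIrrChar lam) (hind : χ = indChar H lam) :
    H ⊔ N = ⊤ ∧
    IsIrrChar (fun x : (H ⊓ N : Subgroup G) => lam ⟨x.1, (Subgroup.mem_inf.mp x.2).1⟩) ∧
    θ = indChar ((H ⊓ N).subgroupOf N)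
      (fun y => lam ⟨(y.1 : G), (Subgroup.mem_inf.mp (Subgroup.mem_subgroupOf.mp y.2)).1⟩) := by
  obtain ⟨W, _, rfl⟩ := hlam
  exact extension_induced_structure_general N H θ hθ W fun n => hind ▸ hext n
end
end

section
/- Let N = S₁ × ⋯ × S_t be a minimal normal subgroup of a finite group G with each S_i isomorphic to a fixed non-abelian simple group S. If σ ∈ Irr(S) extends to Aut(S), then the character σ × ⋯ × σ of N extends to an irreducible character of G. -/
open CategoryTheory BigOperators
open scoped Classical

noncomputable section

/-! The idea: an automorphism of `S ^ ι`, with `S` non-abelian simple, permutes the factors and acts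
on each by an automorphism of `S`, so `Aut (S ^ ι)` is the wreath product `Aut S ≀ Sym ι`. A
representation of `Aut S` affording an extension of `σ` has a tensor power, on which the base group
of this wreath product acts factorwise and `Sym ι` permutes the tensor factors. Conjugation maps `G`
into `Aut N ≃ Aut S ≀ Sym ι`, and the pulled-back tensor power has character `σ × ⋯ × σ` on `N`. It
is irreducible because its restriction to `N` already is. -/

open Function TensorProduct

universe u

section SimpleQuotient

variable {ι : Type*} {H : ι → Type*} [∀ i, Group (H i)] {T : Type*} [Group T]

theorem normal_range_mulSingle [DecidableEq ι] (i : ι) :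
    (MonoidHom.mulSingle H i).range.Normal where
  conj_mem := by
    rintro _ ⟨s, rfl⟩ x
    refine ⟨x i * s * (x i)⁻¹, funext fun j => ?_⟩
    obtain rfl | hj := eq_or_ne j i <;> simp [*]

theorem eq_comp_evalMonoidHom [Finite ι] [DecidableEq ι] (f : (∀ i, H i) →* T) (i : ι)
    (hf : ∀ j ≠ i, ∀ s, f (Pi.mulSingle j s) = 1) :
    f = (f.comp (MonoidHom.mulSingle H i)).comp (Pi.evalMonoidHom H i) := by
  refine MonoidHom.pi_ext fun j s => ?_
  obtain rfl | hj := eq_or_ne j i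
  · simp
  · simp [hf j hj, hj.symm]

theorem exists_eq_comp_evalMonoidHom_of_surjective [Finite ι] [IsSimpleGroup T]
    (hT : ∃ a b : T, a * b ≠ b * a) (f : (∀ i, H i) →* T) (hf : Surjective f) :
    ∃ (i : ι) (φ : H i →* T), Surjective φ ∧ f = φ.comp (Pi.evalMonoidHom H i) := by
  let φ (i : ι) : H i →* T := f.comp (MonoidHom.mulSingle H i)
  have trivial_or_surjective (i : ι) : (∀ s, φ i s = 1) ∨ Surjective (φ i) := by
    have hnormal : (φ i).range.Normal := by
      rw [MonoidHom.range_comp]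
      exact (normal_range_mulSingle i).map f hf
    refine hnormal.eq_bot_or_eq_top.imp (fun h s => ?_) MonoidHom.range_eq_top.1
    simp [MonoidHom.range_eq_bot_iff.1 h]
  obtain ⟨a, b, hab⟩ := hT
  obtain ⟨i, hi⟩ : ∃ i, Surjective (φ i) := by
    by_contra! h
    have hf1 : f = 1 := MonoidHom.pi_ext fun i => (trivial_or_surjective i).resolve_right (h i)
    obtain ⟨x, rfl⟩ := hf a
    simp [hf1] at hab
  refine ⟨i, φ i, hi, eq_comp_evalMonoidHom f i fun j hj => ?_⟩
  refine (trivial_or_surjective j).resolve_right fun hj' => hab ?_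
  obtain ⟨x, rfl⟩ := hj' a
  obtain ⟨y, rfl⟩ := hi b
  exact ((Pi.mulSingle_commute hj x y).map f).eq

theorem injective_of_surjective_of_isSimpleGroup {G : Type*} [Group G] [IsSimpleGroup G]
    [Nontrivial T] (f : G →* T) (hf : Surjective f) : Injective f := by
  refine f.ker_eq_bot_iff.1 (f.normal_ker.eq_bot_or_eq_top.resolve_right fun h => ?_)
  obtain ⟨b, hb⟩ := exists_ne (1 : T)
  obtain ⟨a, rfl⟩ := hf b
  exact hb (MonoidHom.mem_ker.1 (h ▸ Subgroup.mem_top a))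

end SimpleQuotient

/-- The wreath product `H ≀ Sym ι`: `Sym ι` permutes the factors of the base group `ι → H` through
`(π • h) i = h (π⁻¹ i)`. -/
abbrev WreathProduct (H ι : Type*) [Group H] : Type _ := (ι → H) ⋊[mulAutArrow] Equiv.Perm ι

namespace WreathProduct

variable {ι S : Type*} [Group S]

theorem mul_left_apply (w w' : WreathProduct S ι) (i : ι) :
    (w * w').left i = w.left i * w'.left (w.right⁻¹ i) := rfl

variable (ι S) in
/-- The action of `Aut S ≀ Sym ι` on `S ^ ι` by automorphisms: the base group acts coordinatewise
and `Sym ι` permutes the coordinates. -/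
def toMulAut : WreathProduct (MulAut S) ι →* MulAut (ι → S) :=
  SemidirectProduct.lift (MulDistribMulAction.toMulAut (ι → MulAut S) (ι → S)) mulAutArrow
    fun π => by
      ext β x i
      change β (π⁻¹ i) (x i) = β (π⁻¹ i) (x (π⁻¹⁻¹ (π⁻¹ i)))
      simp

theorem toMulAut_apply (w : WreathProduct (MulAut S) ι) (x : ι → S) (i : ι) :
    toMulAut ι S w x i = w.left i (x (w.right⁻¹ i)) := rfl

theorem toMulAut_inl_conj (s : ι → S) :
    toMulAut ι S (SemidirectProduct.inl fun i => MulAut.conj (s i)) = MulAut.conj s := by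
  ext x i
  simp [toMulAut_apply]

theorem toMulAut_injective [Nontrivial S] : Injective (toMulAut ι S) := by
  rw [injective_iff_map_eq_one]
  intro w hw
  have apply_eq (x : ι → S) (i : ι) : w.left i (x (w.right⁻¹ i)) = x i := by
    rw [← toMulAut_apply, hw, MulAut.one_apply]
  have hright : w.right = 1 := by
    refine inv_eq_one.1 (Equiv.ext fun i => ?_)
    obtain ⟨s, hs⟩ := exists_ne (1 : S)
    by_contra hi
    have h := apply_eq (Pi.mulSingle i s) i
    rw [Pi.mulSingle_eq_of_ne (show w.right⁻¹ i ≠ i from hi), Pi.mulSingle_eq_same, map_one] at h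
    exact hs h.symm
  have hleft : w.left = 1 := by
    ext i s
    exact apply_eq (fun _ => s) i
  exact SemidirectProduct.ext hleft hright

theorem surjective_of_apply_eq [Nontrivial S] (α : MulAut (ι → S)) (p : ι → ι) (β : ι → S →* S)
    (hα : ∀ x i, α x i = β i (x (p i))) : Surjective p := by
  intro i
  by_contra! hi
  obtain ⟨s, hs⟩ := exists_ne (1 : S)
  have h : α (Pi.mulSingle i s) = 1 := by
    ext j
    simp [hα, Pi.mulSingle_eq_of_ne (hi j)]
  exact hs (by simpa using h)

theorem toMulAut_surjective [Finite ι] [IsSimpleGroup S] (hS : ∃ a b : S, a * b ≠ b * a) :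
    Surjective (toMulAut ι S) := by
  intro α
  have factor (i : ι) : ∃ (j : ι) (φ : S →* S), Surjective φ ∧ ∀ x, α x i = φ (x j) := by
    obtain ⟨j, φ, hφ, h⟩ := exists_eq_comp_evalMonoidHom_of_surjective hS
      ((Pi.evalMonoidHom (fun _ => S) i).comp α.toMonoidHom)
      ((surjective_eval i).comp α.surjective)
    exact ⟨j, φ, hφ, DFunLike.congr_fun h⟩
  choose p φ hφ hα using factor
  have hφ_bij (i : ι) : Bijective (φ i) :=
    ⟨injective_of_surjective_of_isSimpleGroup (φ i) (hφ i), hφ i⟩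
  have hp : Bijective p :=
    Finite.surjective_iff_bijective.1 (surjective_of_apply_eq α p φ fun x i => hα i x)
  refine ⟨⟨fun i => MulEquiv.ofBijective (φ i) (hφ_bij i), (Equiv.ofBijective p hp)⁻¹⟩, ?_⟩
  ext x i
  rw [toMulAut_apply, inv_inv]
  exact (hα i x).symm

/-- `Aut (S ^ ι) ≃ Aut S ≀ Sym ι` for a non-abelian simple group `S` and a finite `ι`. -/
def mulAutEquiv [Finite ι] [IsSimpleGroup S] (hS : ∃ a b : S, a * b ≠ b * a) :
    WreathProduct (MulAut S) ι ≃* MulAut (ι → S) :=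
  MulEquiv.ofBijective (toMulAut ι S) ⟨toMulAut_injective, toMulAut_surjective hS⟩

theorem mulAutEquiv_symm_conj [Finite ι] [IsSimpleGroup S] (hS : ∃ a b : S, a * b ≠ b * a)
    (s : ι → S) :
    (mulAutEquiv hS).symm (MulAut.conj s) = SemidirectProduct.inl fun i => MulAut.conj (s i) :=
  (mulAutEquiv hS).symm_apply_eq.2 (toMulAut_inl_conj s).symm

end WreathProduct

section TensorPower

variable {ι : Type*} {k : Type*} [CommRing k]

theorem trace_piTensorProduct_map [Fintype ι] {M : ι → Type*} [∀ i, AddCommGroup (M i)]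
    [∀ i, Module k (M i)] [∀ i, Module.Free k (M i)] [∀ i, Module.Finite k (M i)]
    (f : ∀ i, Module.End k (M i)) :
    LinearMap.trace k (⨂[k] i, M i) (PiTensorProduct.map f) =
      ∏ i, LinearMap.trace k (M i) (f i) := by
  let b (i : ι) := Module.Free.chooseBasis k (M i)
  simp only [LinearMap.trace_eq_matrix_trace k (Basis.piTensorProduct b),
    fun i => LinearMap.trace_eq_matrix_trace k (b i) (f i), Matrix.trace, Matrix.diag,
    LinearMap.toMatrix_apply, Basis.piTensorProduct_apply, PiTensorProduct.map_tprod,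
    Basis.piTensorProduct_repr_tprod_apply, Fintype.prod_sum]

variable (ι) in
/-- The tensor power of a representation `ρ` of `H`, as a representation of `H ≀ Sym ι`: the base
group acts factorwise through `ρ`, and `Sym ι` permutes the tensor factors. -/
def wreathTensorPower {H V : Type*} [Group H] [AddCommGroup V] [Module k V]
    (ρ : Representation k H V) : Representation k (WreathProduct H ι) (⨂[k] _ : ι, V) where
  toFun w := PiTensorProduct.map (fun i => ρ (w.left i)) ∘ₗ
    (PiTensorProduct.reindex k (fun _ => V) w.right).toLinearMap
  map_one' := by
    ext x
    simp [Equiv.Perm.one_def]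
  map_mul' w w' := by
    ext x
    simp [-SemidirectProduct.mul_left, WreathProduct.mul_left_apply, Equiv.Perm.mul_def]

theorem trace_wreathTensorPower_inl [Fintype ι] {H V : Type*} [Group H] [AddCommGroup V]
    [Module k V] [Module.Free k V] [Module.Finite k V] (ρ : Representation k H V) (h : ι → H) :
    LinearMap.trace k _ (wreathTensorPower ι ρ (SemidirectProduct.inl h)) =
      ∏ i, LinearMap.trace k V (ρ (h i)) := by
  rw [← trace_piTensorProduct_map]
  congr 1
  ext x
  simp [wreathTensorPower, Equiv.Perm.one_def]

end TensorPower

theorem simple_of_simple_map {C D : Type*} [Category* C] [Category* D]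
    [Limits.HasZeroMorphisms C] [Limits.HasZeroMorphisms D] (F : C ⥤ D)
    [F.PreservesMonomorphisms] [F.Faithful] [F.ReflectsIsomorphisms] [F.PreservesZeroMorphisms]
    (X : C) [Simple (F.obj X)] : Simple X where
  mono_isIso_iff_nonzero f _ := by
    rw [← isIso_iff_of_reflects_iso f F, Simple.mono_isIso_iff_nonzero, Ne, F.map_eq_zero_iff]

theorem simple_of_simple_res {k : Type u} [Field k] {G H : Type*} [Monoid G] [Monoid H]
    (f : H →* G) (V : FDRep k G) [Simple ((Action.res (FGModuleCat k) f).obj V)] : Simple V :=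
  have : (Action.res (FGModuleCat k) f ⋙ Action.forget _ _).PreservesMonomorphisms :=
    inferInstanceAs (Action.forget _ _).PreservesMonomorphisms
  have := Functor.preservesMonomorphisms_of_preserves_of_reflects (Action.res (FGModuleCat k) f)
    (Action.forget _ _)
  simple_of_simple_map (Action.res _ f) V

theorem simple_of_character_eq_prod {k : Type u} [Field k] [IsAlgClosed k] [CharZero k]
    {ι : Type*} [Fintype ι] {H : ι → Type u} [∀ i, Group (H i)] [∀ i, Finite (H i)]
    (U : ∀ i, FDRep k (H i)) [hU : ∀ i, Simple (U i)]
    {M : Type u} [Group M] (e : M ≃* ∀ i, H i) (W : FDRep k M)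
    (hW : ∀ m, W.character m = ∏ i, (U i).character (e m i)) : Simple W := by
  have (i : ι) : Fintype (H i) := Fintype.ofFinite _
  have : Fintype M := Fintype.ofEquiv _ e.symm.toEquiv
  replace hU (i : ι) := (FDRep.simple_iff_char_is_norm_one (U i)).1 (hU i)
  rw [FDRep.simple_iff_char_is_norm_one]
  calc ∑ m, W.character m * W.character m⁻¹
      = ∑ m, ∏ i, (U i).character (e m i) * (U i).character (e m i)⁻¹ := by
        simp only [hW, map_inv, Pi.inv_apply, Finset.prod_mul_distrib]
    _ = ∑ x : ∀ i, H i, ∏ i, (U i).character (x i) * (U i).character (x i)⁻¹ :=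
        e.toEquiv.sum_comp fun x => ∏ i, (U i).character (x i) * (U i).character (x i)⁻¹
    _ = ∏ i, (Nat.card (H i) : k) := by
        rw [← Fintype.prod_sum (fun i s => (U i).character s * (U i).character s⁻¹)]
        exact Finset.prod_congr rfl fun i _ => hU i
    _ = Nat.card M := by rw [Nat.card_congr e.toEquiv, Nat.card_pi, Nat.cast_prod]

section Conjugation

variable {G : Type*} [Group G] {N : Subgroup G} [N.Normal] {S : Type*} [Group S]
  [IsSimpleGroup S] (hS : ∃ a b : S, a * b ≠ b * a) {ι : Type*} [Finite ι] (e : N ≃* (ι → S))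

/-- The action of `G` by conjugation on a normal subgroup `N ≃ S ^ ι`, with `S` non-abelian simple,
as a homomorphism into `Aut S ≀ Sym ι`. -/
def conjWreath : G →* WreathProduct (MulAut S) ι :=
  (WreathProduct.mulAutEquiv hS).symm.toMonoidHom.comp
    ((MulAut.congr e).toMonoidHom.comp MulAut.conjNormal)

theorem conjWreath_coe (n : N) :
    conjWreath hS e n = SemidirectProduct.inl fun i => MulAut.conj (e n i) := by
  have h : MulAut.congr e (MulAut.conjNormal (n : G)) = MulAut.conj (e n) := by
    rw [MulAut.conjNormal_val]
    ext x : 1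
    simp [MulAut.congr]
  rw [← WreathProduct.mulAutEquiv_symm_conj hS, ← h]
  rfl

end Conjugation

theorem diag_char_extends_general {k : Type u} [Field k] [IsAlgClosed k] [CharZero k]
    {G : Type u} [Group G] {N : Subgroup G} [N.Normal]
    {S : Type u} [Group S] [Finite S] [IsSimpleGroup S] (hna : ∃ a b : S, a * b ≠ b * a)
    {ι : Type u} [Fintype ι] (e : N ≃* (ι → S))
    (U : FDRep k S) [Simple U] (V : FDRep k (MulAut S))
    (hV : ∀ s : S, V.character (MulAut.conj s) = U.character s) :
    ∃ W : FDRep k G, Simple W ∧ ∀ n : N, W.character n = ∏ i, U.character (e n i) := by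
  let W : FDRep k G := FDRep.of ((wreathTensorPower ι V.ρ).comp (conjWreath hna e))
  have hW (n : N) : W.character n = ∏ i, U.character (e n i) := by
    calc W.character n
        = LinearMap.trace k _ (wreathTensorPower ι V.ρ (conjWreath hna e n)) := rfl
      _ = ∏ i, V.character (MulAut.conj (e n i)) := by
          rw [conjWreath_coe, trace_wreathTensorPower_inl]
          rfl
      _ = ∏ i, U.character (e n i) := by simp only [hV]
  have : Simple ((Action.res (FGModuleCat k) N.subtype).obj W) :=
    simple_of_character_eq_prod (fun _ => U) e _ hW
  exact ⟨W, simple_of_simple_res N.subtype W, hW⟩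

/-- If a minimal normal subgroup `N` of `G` is a direct product of `t` copies of a
non-abelian simple group `S` and `σ ∈ Irr(S)` extends to `Aut(S)`, then
`σ × ⋯ × σ` extends to `G`. -/
theorem diag_char_extends (G : Type) [Group G] [Fintype G]
    (N : Subgroup G) [N.Normal] (hN1 : N ≠ ⊥)
    (hmin : ∀ K : Subgroup G, K.Normal → K ≤ N → K = ⊥ ∨ K = N)
    (S : Type) [Group S] [Fintype S] [IsSimpleGroup S] (hna : ∃ a b : S, a * b ≠ b * a)
    (t : ℕ) (e : N ≃* (Fin t → S))
    (σ : S → ℂ) (hσ : IsIrrChar σ)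
    (hextAut : ∃ σt : MulAut S → ℂ, IsIrrChar σt ∧ ∀ s : S, σt (MulAut.conj s) = σ s) :
    ∃ χ : G → ℂ, IsIrrChar χ ∧ ∀ n : N, χ n = ∏ i, σ (e n i) := by
  obtain ⟨U, _, rfl⟩ := hσ
  obtain ⟨_, ⟨V, -, rfl⟩, hV⟩ := hextAut
  obtain ⟨W, hW, hWN⟩ := diag_char_extends_general hna e U V hV
  exact ⟨W.character, ⟨W, hW, rfl⟩, hWN⟩
end
end
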